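/- Let F be a field, G a group, and A an associative G-graded F-algebra. Assume there exist a field extension F̃ of F and a G-graded simple F̃-algebra Ã such that: (i) Ã is isomorphic as a graded F̃-algebra to End_D(V) for some finite-dimensional graded vector space V over a commutative graded division F̃-algebra D; (ii) A is a homogeneous F-subalgebra of Ã; (iii) F̃·A = Ã. Then every nonzero homogeneous ideal of A intersects Z(A)_e nontrivially, and A satisfies an ordinary polynomial identity. In particular, if Z(A)_e is a field, then A is a graded simple F-algebra satisfying an ordinary polynomial identity. -/

import Mathlib

noncomputable section

section Setup

variable (FF : Type*) [Field FF] {G : Type*} [Group G] [DecidableEq G]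

/-- `𝒜` is a `G`-grading of the associative `FF`-algebra `tA`. -/
def IsAlgGrading {tA : Type*} [Ring tA] [Algebra FF tA] (𝒜 : G → Submodule FF tA) : Prop :=
  DirectSum.IsInternal 𝒜 ∧ ∀ (g h : G), ∀ a ∈ 𝒜 g, ∀ b ∈ 𝒜 h, a * b ∈ 𝒜 (g * h)

/-- `(D, 𝒟)` is a commutative graded division algebra. -/
def IsGradedDivisionAlgebra {D : Type*} [CommRing D] [Algebra FF D]
    (𝒟 : G → Submodule FF D) : Prop :=
  IsAlgGrading FF 𝒟 ∧ (1 : D) ∈ 𝒟 1 ∧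
    ∀ g : G, ∀ d ∈ 𝒟 g, d ≠ 0 → ∃ d' ∈ 𝒟 g⁻¹, d * d' = 1

/-- the degree-`h` component of `End_FF(V)`: maps sending `𝒱 g` into `𝒱 (h*g)`. -/
def endVGrading {V : Type*} [AddCommGroup V] [Module FF V]
    (𝒱 : G → Submodule FF V) (h : G) : Submodule FF (Module.End FF V) where
  carrier := {φ | ∀ g : G, ∀ x ∈ 𝒱 g, φ x ∈ 𝒱 (h * g)}
  add_mem' := fun hf hg g x hx => (𝒱 _).add_mem (hf g x hx) (hg g x hx)
  zero_mem' := fun g x hx => (𝒱 _).zero_mem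
  smul_mem' := fun c f hf g x hx => (𝒱 _).smul_mem c (hf g x hx)

/-- `End_D(V)` inside `End_FF(V)`: the `FF`-linear endomorphisms commuting with the `D`-action. -/
def EndDV {D : Type*} [CommRing D] [Algebra FF D] {V : Type*} [AddCommGroup V] [Module FF V]
    [Module D V] [IsScalarTower FF D V] [SMulCommClass FF D V] :
    Submodule FF (Module.End FF V) where
  carrier := {f | ∀ (d : D) (x : V), f (d • x) = d • f x}
  add_mem' := by intro f g hf hg d x; simp [LinearMap.add_apply, hf d x, hg d x]
  zero_mem' := by intro d x; simp
  smul_mem' := by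
    intro c f hf d x
    simp only [LinearMap.smul_apply, hf d x]
    rw [smul_comm]

/-- the degree-`e` part of the center of the `F`-subalgebra `S` of `tA`. -/
def ZAe (F : Type*) [Field F] {tA : Type*} [Ring tA] [Algebra FF tA] [Algebra F tA]
    (S : NonUnitalSubalgebra F tA) (𝒜 : G → Submodule FF tA) : Set tA :=
  {x | x ∈ S ∧ (∀ y ∈ S, x * y = y * x) ∧ x ∈ 𝒜 (1 : G)}

end Setup

section Helpers
open Matrix

theorem ml_mem_of_span {FF M W ι : Type*} [Field FF] [AddCommGroup M] [Module FF M]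
    [AddCommGroup W] [Module FF W] [Finite ι] [DecidableEq ι]
    (g : MultilinearMap FF (fun _ : ι => M) W) (I : Set M) (hI : Submodule.span FF I = ⊤)
    (K : Submodule FF W) (h : ∀ v : ι → M, (∀ i, v i ∈ I) → g v ∈ K) (v : ι → M) : g v ∈ K := by
  cases nonempty_fintype ι
  have key : ∀ s : Finset ι, ∀ v : ι → M, (∀ i, i ∉ s → v i ∈ I) → g v ∈ K := by
    intro s
    induction s using Finset.induction_on with
    | empty => intro v hv; exact h v (fun i => hv i (by simp))
    | insert a s ha ih =>
      intro v hv
      have : ∀ X ∈ Submodule.span FF I, g (Function.update v a X) ∈ K := by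
        intro X hX
        induction hX using Submodule.span_induction with
        | mem x hx =>
          apply ih
          intro i hi
          by_cases hia : i = a
          · subst hia; simpa using hx
          · rw [Function.update_of_ne hia]; exact hv i (by simp [hia, hi])
        | zero => rw [g.map_update_zero]; exact K.zero_mem
        | add x y _ _ hx hy => rw [g.map_update_add]; exact K.add_mem hx hy
        | smul c x _ hx => rw [g.map_update_smul]; exact K.smul_mem _ hx
      have := this (v a) (by rw [hI]; trivial)
      simpa using this
  exact key Finset.univ v (by simp)

section razm
variable {n D : Type*} [Fintype n] [DecidableEq n] [CommRing D]

/-- the alternating Capelli expression -/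
def capelli {m : ℕ} (y y' : Fin m → Matrix n n D) :
    (Matrix n n D) [⋀^Fin m]→ₗ[D] (Matrix n n D) :=
  MultilinearMap.alternatization ((MultilinearMap.mkPiAlgebraFin D m (Matrix n n D)).compLinearMap
    (fun k => (LinearMap.mulLeft D (y k)).comp (LinearMap.mulRight D (y' k))))

theorem capelli_apply {m : ℕ} (y y' x : Fin m → Matrix n n D) :
    capelli y y' x = ∑ σ : Equiv.Perm (Fin m), (Equiv.Perm.sign σ : ℤˣ) •
      (List.ofFn fun k => y k * (x (σ k) * y' k)).prod := by
  simp [capelli, MultilinearMap.alternatization_apply]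

theorem prod_mul_mem {R : Type*} [Ring R] (I : NonUnitalSubring R) (l : List R) (hl : ∀ a ∈ l, a ∈ I)
    (y : R) (hy : y ∈ I) : l.prod * y ∈ I := by
  induction l with
  | nil => simpa
  | cons a l ih =>
    rw [List.prod_cons, mul_assoc]
    exact I.mul_mem (hl a (by simp)) (ih fun b hb => hl b (by simp [hb]))

theorem mul_prod_mem {R : Type*} [Ring R] (I : NonUnitalSubring R) (l : List R) (hl : ∀ a ∈ l, a ∈ I)
    (y : R) (hy : y ∈ I) : y * l.prod ∈ I := by
  induction l generalizing y with
  | nil => simpa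
  | cons a l ih =>
    rw [List.prod_cons, ← mul_assoc]
    exact ih (fun b hb => hl b (by simp [hb])) _ (I.mul_mem hy (hl a (by simp)))

theorem term_split {R : Type*} [Ring R] (I : NonUnitalSubring R) {m : ℕ} (y y' x : Fin m → R)
    (hx : ∀ i, x i ∈ I) (hy : ∀ i, y i ∈ I) (hy' : ∀ i, y' i ∈ I) (i : Fin m)
    (σ : Equiv.Perm (Fin m)) : ∃ p ∈ I, ∃ q ∈ I, ∀ X,
      (List.ofFn fun k => y k * (Function.update x i X (σ k) * y' k)).prod = p * X * q := by
  obtain ⟨l1, l2, hl⟩ := List.append_of_mem (List.mem_finRange (σ.symm i))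
  have hnd := List.nodup_finRange m
  rw [hl, List.nodup_append] at hnd
  obtain ⟨h1, h2, h3⟩ := hnd
  have hk2 : σ.symm i ∉ l2 := (List.nodup_cons.1 h2).1
  have hk1 : σ.symm i ∉ l1 := fun h => h3 _ h _ (by simp) rfl
  let f : Fin m → R := fun k => y k * (x (σ k) * y' k)
  have hf : ∀ k, f k ∈ I := fun k => I.mul_mem (hy k) (I.mul_mem (hx _) (hy' k))
  refine ⟨(l1.map f).prod * y (σ.symm i), prod_mul_mem I _ ?_ _ (hy _),
    y' (σ.symm i) * (l2.map f).prod, mul_prod_mem I _ ?_ _ (hy' _), ?_⟩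
  · intro a ha
    obtain ⟨k, _, rfl⟩ := List.mem_map.1 ha
    exact hf k
  · intro a ha
    obtain ⟨k, _, rfl⟩ := List.mem_map.1 ha
    exact hf k
  intro X
  have hne : ∀ k, k ≠ σ.symm i → y k * (Function.update x i X (σ k) * y' k) = f k := by
    intro k hk
    rw [Function.update_of_ne]
    intro h; apply hk; rw [← h]; simp
  rw [List.ofFn_eq_map, hl, List.map_append, List.map_cons, List.prod_append, List.prod_cons]
  rw [List.map_congr_left (l := l1) (g := f) (fun k hk => hne k (fun h => hk1 (h ▸ hk)))]
  rw [List.map_congr_left (l := l2) (g := f) (fun k hk => hne k (fun h => hk2 (h ▸ hk)))]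
  rw [Equiv.apply_symm_apply, Function.update_self]
  generalize (l1.map f).prod = P1
  generalize (l2.map f).prod = P2
  rw [mul_assoc (y _), mul_assoc X, mul_assoc (P1 * _), mul_assoc P1]

theorem cramer_alt {R M ι : Type*} [CommRing R] [AddCommGroup M] [Module R M] [Fintype ι]
    [DecidableEq ι] (b : Module.Basis ι R M) (f : M [⋀^ι]→ₗ[R] R) (x : ι → M) (X : M) :
    ∑ i, f (Function.update x i X) • x i = f x • X := by
  obtain ⟨c, hf⟩ : ∃ c, ∀ v, f v = c * b.det v := by
    refine ⟨f b, fun v => ?_⟩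
    conv_lhs => rw [f.eq_smul_basis_det b]
    simp
  simp only [hf, mul_smul, ← Finset.smul_sum]
  congr 1
  apply b.repr.injective
  ext j
  have := congrFun (Matrix.mulVec_cramer (b.toMatrix x) (b.repr X)) j
  simp only [Matrix.mulVec, dotProduct, Matrix.cramer_apply] at this
  simp only [map_sum, map_smul, Finsupp.coe_finsetSum, Finset.sum_apply, Module.Basis.det_apply,
    Module.Basis.toMatrix_update]
  simpa [Module.Basis.toMatrix_apply, mul_comm] using this

theorem adj_exists (I : NonUnitalSubring (Matrix n n D)) {m : ℕ} (y y' x : Fin m → Matrix n n D)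
    (hx : ∀ i, x i ∈ I) (hy : ∀ i, y i ∈ I) (hy' : ∀ i, y' i ∈ I) (i : Fin m)
    (Z : Matrix n n D) (hZ : Z ∈ I) :
    ∃ P ∈ I, ∀ X, trace (X * P) = trace (Z * capelli y y' (Function.update x i X)) := by
  choose p hp q hq h using term_split I y y' x hx hy hy' i
  refine ⟨∑ σ : Equiv.Perm (Fin m), (Equiv.Perm.sign σ : ℤˣ) • (q σ * Z * p σ), ?_, ?_⟩
  · refine sum_mem fun σ _ => ?_
    have : q σ * Z * p σ ∈ I := I.mul_mem (I.mul_mem (hq σ) hZ) (hp σ)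
    rcases Int.units_eq_one_or (Equiv.Perm.sign σ) with h | h <;> rw [h]
    · simpa
    · simpa using this
  · intro X
    simp only [capelli_apply, h, Finset.mul_sum, trace_sum]
    refine Finset.sum_congr rfl fun σ _ => ?_
    have e : trace (X * (q σ * Z * p σ)) = trace (Z * (p σ * X * q σ)) := by
      rw [← mul_assoc, ← mul_assoc, trace_mul_comm (X * q σ * Z), ← mul_assoc, ← mul_assoc,
        trace_mul_comm _ Z]
    rcases Int.units_eq_one_or (Equiv.Perm.sign σ) with h | h <;> rw [h] <;> simp [e]

theorem razm_mem (I : NonUnitalSubring (Matrix n n D)) {m : ℕ} (e : n × n ≃ Fin m)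
    (y y' x : Fin m → Matrix n n D)
    (hx : ∀ i, x i ∈ I) (hy : ∀ i, y i ∈ I) (hy' : ∀ i, y' i ∈ I)
    (Z Y : Matrix n n D) (hZ : Z ∈ I) (hY : Y ∈ I) :
    (trace (Z * capelli y y' x) * trace Y) • (1 : Matrix n n D) ∈ I := by
  choose P hP h using fun i => adj_exists I y y' x hx hy hy' i Z hZ
  let b : Module.Basis (Fin m) D (Matrix n n D) := (Matrix.stdBasis D n n).reindex e
  let f : (Matrix n n D) [⋀^Fin m]→ₗ[D] D :=
    ((traceLinearMap n D D).comp (LinearMap.mulLeft D Z)).compAlternatingMap (capelli y y')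
  have hf : ∀ v, f v = trace (Z * capelli y y' v) := fun v => rfl
  have hc := cramer_alt b f x
  have key : (trace (Z * capelli y y' x) * trace Y) • (1 : Matrix n n D) =
      ∑ i, x i * Y * P i := by
    ext r s
    have hPe : ∀ i c, P i c s = f (Function.update x i (single s c 1)) := by
      intro i c
      rw [hf, ← h, trace_single_mul]; simp
    simp only [Matrix.sum_apply, mul_apply (M := x _ * Y), hPe]
    rw [Finset.sum_comm]
    have h2 : ∀ c, ∑ i, (x i * Y) r c * f (Function.update x i (single s c 1)) =
        f x * ((single s c 1 : Matrix n n D) * Y) r c := by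
      intro c
      have := congrArg (fun T : Matrix n n D => (T * Y) r c) (hc (single s c 1))
      simp only [Finset.sum_mul, Matrix.sum_apply, smul_mul_assoc, Matrix.smul_apply, smul_eq_mul] at this
      rw [← this]
      exact Finset.sum_congr rfl fun i _ => mul_comm _ _
    rw [Finset.sum_congr rfl fun c _ => h2 c, ← Finset.mul_sum, ← hf]
    by_cases hrs : r = s
    · subst hrs
      simp [trace]
    · simp [hrs]
  rw [key]
  exact sum_mem fun i _ => I.mul_mem (I.mul_mem (hx i) hY) (hP i)

theorem razm_one {m : ℕ} (e : n × n ≃ Fin m) (i0 : n) :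
    trace (single i0 i0 (1:D) * capelli (fun k => single i0 (e.symm k).1 (1:D))
      (fun k => single (e.symm k).2 i0 (1:D))
      (fun k => single (e.symm k).1 (e.symm k).2 (1:D))) = 1 := by
  rw [capelli_apply, Finset.sum_eq_single 1]
  · simp only [Equiv.Perm.sign_one, one_smul, Equiv.Perm.one_apply, single_mul_single_same, mul_one]
    have : ∀ k : ℕ, single i0 i0 (1:D) * (single i0 i0 (1:D))^k = single i0 i0 (1:D) := by
      intro k
      induction k with
      | zero => simp
      | succ k ih => rw [pow_succ, ← mul_assoc, ih]; simp
    simp [List.ofFn_const, this]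
  · intro σ _ hσ
    rw [List.prod_eq_zero, smul_zero]
    obtain ⟨k, hk⟩ : ∃ k, σ k ≠ k := by
      by_contra! hh
      exact hσ (Equiv.ext hh)
    rw [List.mem_ofFn]
    refine ⟨k, ?_⟩
    have : e.symm (σ k) ≠ e.symm k := fun h => hk (e.symm.injective h)
    by_cases h1 : (e.symm k).1 = (e.symm (σ k)).1
    · have h2 : (e.symm (σ k)).2 ≠ (e.symm k).2 := fun h => this (Prod.ext h1.symm h)
      simp [h2]
    · rw [← mul_assoc, single_mul_single_of_ne (h := h1), zero_mul]
  · simp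

theorem one_mem_span_center {FF : Type*} [Field FF] [Algebra FF D] [Nonempty n]
    (I : NonUnitalSubring (Matrix n n D)) 
    (hI : Submodule.span FF (I : Set (Matrix n n D)) = ⊤) :
    (1 : Matrix n n D) ∈ Submodule.span FF {z | z ∈ I ∧ ∀ w, z * w = w * z} := by
  set K := Submodule.span FF {z : Matrix n n D | z ∈ I ∧ ∀ w, z * w = w * z} with hK
  let e : n × n ≃ Fin (Fintype.card (n × n)) := Fintype.equivFin _
  have ht : ∀ (a : FF) (Z : Matrix n n D), trace (a • Z) = a • trace Z := fun a Z => trace_smul a Z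
  have h0 : ∀ y y' x, (∀ i, x i ∈ I) → (∀ i, y i ∈ I) → (∀ i, y' i ∈ I) → ∀ Z ∈ I, ∀ Y ∈ I,
      (trace (Z * capelli (m := Fintype.card (n × n)) y y' x) * trace Y) • (1 : Matrix n n D) ∈ K :=
    fun y y' x hx hy hy' Z hZ Y hY => Submodule.subset_span
      ⟨razm_mem I e y y' x hx hy hy' Z Y hZ hY, by intro w; simp⟩
  have h1 : ∀ y y' x, (∀ i, x i ∈ I) → (∀ i, y i ∈ I) → (∀ i, y' i ∈ I) → ∀ Z ∈ I, ∀ Y : Matrix n n D,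
      (trace (Z * capelli (m := Fintype.card (n × n)) y y' x) * trace Y) • (1 : Matrix n n D) ∈ K := by
    intro y y' x hx hy hy' Z hZ Y
    have : Y ∈ Submodule.span FF (I : Set (Matrix n n D)) := by rw [hI]; trivial
    induction this using Submodule.span_induction with
    | mem Y hY => exact h0 y y' x hx hy hy' Z hZ Y hY
    | zero => simp
    | add Y1 Y2 _ _ h h' => rw [trace_add, mul_add, add_smul]; exact K.add_mem h h'
    | smul a Y _ h => rw [ht, mul_smul_comm, smul_assoc]; exact K.smul_mem _ h
  have h2 : ∀ y y' x, (∀ i, x i ∈ I) → (∀ i, y i ∈ I) → (∀ i, y' i ∈ I) → ∀ Z Y : Matrix n n D,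
      (trace (Z * capelli (m := Fintype.card (n × n)) y y' x) * trace Y) • (1 : Matrix n n D) ∈ K := by
    intro y y' x hx hy hy' Z Y
    have : Z ∈ Submodule.span FF (I : Set (Matrix n n D)) := by rw [hI]; trivial
    induction this using Submodule.span_induction with
    | mem Z hZ => exact h1 y y' x hx hy hy' Z hZ Y
    | zero => simp
    | add Y1 Y2 _ _ h h' => rw [add_mul, trace_add, add_mul, add_smul]; exact K.add_mem h h'
    | smul a Y _ h => rw [smul_mul_assoc, ht, smul_mul_assoc, smul_assoc]; exact K.smul_mem _ h
  have lin : ∀ Z Y : Matrix n n D, ∃ L : Matrix n n D →ₗ[FF] Matrix n n D, ∀ X,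
      L X = (trace (Z * X) * trace Y) • (1 : Matrix n n D) := by
    intro Z Y
    refine ⟨{ toFun := fun X => (trace (Z * X) * trace Y) • (1 : Matrix n n D), map_add' := ?_, map_smul' := ?_ }, fun X => rfl⟩
    · intro a b; rw [mul_add, trace_add, add_mul, add_smul]
    · intro a b; rw [mul_smul_comm, ht, smul_mul_assoc, smul_assoc]; rfl
  let mk := MultilinearMap.mkPiAlgebraFin FF (Fintype.card (n × n)) (Matrix n n D)
  have h3 : ∀ y y' x, (∀ i, y i ∈ I) → (∀ i, y' i ∈ I) → ∀ Z Y : Matrix n n D,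
      (trace (Z * capelli (m := Fintype.card (n × n)) y y' x) * trace Y) • (1 : Matrix n n D) ∈ K := by
    intro y y' x hy hy' Z Y
    obtain ⟨L, hL⟩ := lin Z Y
    let g := L.compMultilinearMap (∑ σ : Equiv.Perm (Fin (Fintype.card (n × n))),
      (Equiv.Perm.sign σ : ℤˣ) • (mk.compLinearMap (fun k => (LinearMap.mulLeft FF (y k)).comp
        (LinearMap.mulRight FF (y' k)))).domDomCongr σ)
    have hg : ∀ x, g x = (trace (Z * capelli y y' x) * trace Y) • (1 : Matrix n n D) := by
      intro x
      rw [← hL, capelli_apply]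
      simp [g, mk]
    rw [← hg]
    exact ml_mem_of_span g I hI K (fun v hv => by rw [hg]; exact h2 y y' v hv hy hy' Z Y) x
  have h4 : ∀ y y' x, (∀ i, y' i ∈ I) → ∀ Z Y : Matrix n n D,
      (trace (Z * capelli (m := Fintype.card (n × n)) y y' x) * trace Y) • (1 : Matrix n n D) ∈ K := by
    intro y y' x hy' Z Y
    obtain ⟨L, hL⟩ := lin Z Y
    let g := L.compMultilinearMap (∑ σ : Equiv.Perm (Fin (Fintype.card (n × n))),
      (Equiv.Perm.sign σ : ℤˣ) • (mk.compLinearMap (fun k =>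
        (LinearMap.mulRight FF (x (σ k) * y' k)))))
    have hg : ∀ y, g y = (trace (Z * capelli y y' x) * trace Y) • (1 : Matrix n n D) := by
      intro y
      rw [← hL, capelli_apply]
      simp [g, mk, mul_assoc]
    rw [← hg]
    exact ml_mem_of_span g I hI K (fun v hv => by rw [hg]; exact h3 v y' x hv hy' Z Y) y
  have h5 : ∀ y y' x, ∀ Z Y : Matrix n n D,
      (trace (Z * capelli (m := Fintype.card (n × n)) y y' x) * trace Y) • (1 : Matrix n n D) ∈ K := by
    intro y y' x Z Y
    obtain ⟨L, hL⟩ := lin Z Y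
    let g := L.compMultilinearMap (∑ σ : Equiv.Perm (Fin (Fintype.card (n × n))),
      (Equiv.Perm.sign σ : ℤˣ) • (mk.compLinearMap (fun k =>
        (LinearMap.mulLeft FF (y k)).comp (LinearMap.mulLeft FF (x (σ k))))))
    have hg : ∀ y', g y' = (trace (Z * capelli y y' x) * trace Y) • (1 : Matrix n n D) := by
      intro y'
      rw [← hL, capelli_apply]
      simp [g, mk]
    rw [← hg]
    exact ml_mem_of_span g I hI K (fun v hv => by rw [hg]; exact h4 y v x hv Z Y) y'
  obtain ⟨i0⟩ := ‹Nonempty n›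
  have := h5 (fun k => single i0 (e.symm k).1 (1:D))
      (fun k => single (e.symm k).2 i0 (1:D))
      (fun k => single (e.symm k).1 (e.symm k).2 (1:D)) (single i0 i0 1) (single i0 i0 1)
  rw [razm_one (D := D) e i0] at this
  simpa using this

end razm

/-- standard polynomial -/
def stdPoly (F : Type*) [Field F] (m : ℕ) : FreeAlgebra F ℕ :=
  ∑ σ : Equiv.Perm (Fin m), (Equiv.Perm.sign σ : ℤˣ) •
      (List.ofFn fun k => FreeAlgebra.ι F ((σ k : Fin m) : ℕ)).prod

theorem stdPoly_ne (F : Type*) [Field F] (m : ℕ) : stdPoly F m ≠ 0 := by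
  intro h
  have h2 := congrArg (FreeAlgebra.lift F
    (fun k : ℕ => MonoidAlgebra.of F (FreeMonoid ℕ) (FreeMonoid.of k))) h
  have h3 : ∀ σ : Equiv.Perm (Fin m), (List.ofFn fun k => MonoidAlgebra.of F (FreeMonoid ℕ)
      (FreeMonoid.of ((σ k : Fin m) : ℕ))).prod = MonoidAlgebra.single
        (FreeMonoid.ofList (List.ofFn fun k => ((σ k : Fin m) : ℕ))) 1 := by
    intro σ
    rw [← MonoidAlgebra.of_apply]
    have : (List.ofFn fun k => MonoidAlgebra.of F (FreeMonoid ℕ)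
      (FreeMonoid.of ((σ k : Fin m) : ℕ))) = ((List.ofFn fun k => ((σ k : Fin m) : ℕ)).map
        FreeMonoid.of).map (MonoidAlgebra.of F (FreeMonoid ℕ)) := by
      simp [List.map_ofFn, Function.comp_def]
    rw [this, ← map_list_prod]
    congr 1
    generalize (List.ofFn fun k => ((σ k : Fin m) : ℕ)) = l
    induction l with
    | nil => rfl
    | cons a l ih => rw [List.map_cons, List.prod_cons, ih]; rfl
  simp only [stdPoly, map_sum, map_zero, Units.smul_def, map_zsmul, map_list_prod, List.map_ofFn,
    Function.comp_def, FreeAlgebra.lift_ι_apply, h3] at h2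
  have h4 := congrArg (fun z => (MonoidAlgebra.coeff z)
    (FreeMonoid.ofList (List.ofFn fun k : Fin m => (k : ℕ)))) h2
  have h5 : ∀ σ : Equiv.Perm (Fin m), FreeMonoid.ofList (List.ofFn fun k => ((σ k : Fin m) : ℕ)) =
      FreeMonoid.ofList (List.ofFn fun k : Fin m => (k : ℕ)) ↔ σ = 1 := by
    intro σ
    rw [FreeMonoid.ofList.injective.eq_iff, List.ofFn_injective.eq_iff]
    constructor
    · intro h; ext k; exact congrFun h k
    · rintro rfl; rfl
  classical
  simp [Finsupp.single_apply, h5] at h4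

theorem std_identity {n D : Type*} [Fintype n] [DecidableEq n] [CommRing D] 
    (v : ℕ → Matrix n n D) : ∑ σ : Equiv.Perm (Fin (Fintype.card (n × n) + 1)), (Equiv.Perm.sign σ : ℤˣ) •
      (List.ofFn fun k => v ((σ k : Fin _) : ℕ)).prod = 0 := by
  let g := MultilinearMap.alternatization
    (MultilinearMap.mkPiAlgebraFin D (Fintype.card (n × n) + 1) (Matrix n n D))
  have hg : g = 0 := by
    apply (Matrix.stdBasis D n n).ext_alternating
    intro w hw
    have := Fintype.card_le_of_injective w hw
    simp at this
  have := congrArg (fun g => g (fun k => v k)) hg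
  simpa [g, MultilinearMap.alternatization_apply] using this

theorem proj_exists {FF G M : Type*} [Field FF] [DecidableEq G] [AddCommGroup M] [Module FF M]
    (𝒜 : G → Submodule FF M) (h : DirectSum.IsInternal 𝒜) :
    ∃ P : G → M →ₗ[FF] M, (∀ g x, P g x ∈ 𝒜 g) ∧ (∀ g, ∀ x ∈ 𝒜 g, P g x = x) ∧
      (∀ g k, g ≠ k → ∀ x ∈ 𝒜 g, P k x = 0) ∧ (∀ x, ∃ s : Finset G, x = ∑ g ∈ s, P g x) := by
  classical
  let _ := h.chooseDecomposition
  refine ⟨fun g => (𝒜 g).subtype.comp ((DirectSum.component FF G (fun g => 𝒜 g) g).comp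
    (DirectSum.decomposeLinearEquiv 𝒜).toLinearMap), ?_, ?_, ?_, ?_⟩
  · intro g x; simp
  · intro g x hx
    exact DirectSum.decompose_of_mem_same 𝒜 hx
  · intro g k hgk x hx
    exact DirectSum.decompose_of_mem_ne 𝒜 hx hgk
  · intro x
    exact ⟨_, (DirectSum.sum_support_decompose 𝒜 x).symm⟩

theorem homog_proj_mem {F FF G M : Type*} [Field F] [Field FF] [AddCommGroup M] [Module FF M]
    [SMul F FF] [Module F M] [IsScalarTower F FF M] (𝒜 : G → Submodule FF M) (P : G → M →ₗ[FF] M)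
    (h1 : ∀ g, ∀ x ∈ 𝒜 g, P g x = x) (h2 : ∀ g k, g ≠ k → ∀ x ∈ 𝒜 g, P k x = 0)
    (I : Submodule F M) (hI : I = ⨆ g, I ⊓ (𝒜 g).restrictScalars F) (k : G) (x : M) (hx : x ∈ I) :
    P k x ∈ I := by
  rw [hI] at hx
  induction hx using Submodule.iSup_induction' with
  | mem g x hx =>
    by_cases hg : g = k
    · subst hg; rw [h1 g x hx.2]; exact hx.1
    · rw [h2 g k hg x hx.2]; exact I.zero_mem
  | zero => simp
  | add x y _ _ hx hy => rw [map_add]; exact I.add_mem hx hy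

theorem homog_basis {FF G D V : Type*} [Field FF] [Group G] [DecidableEq G] [CommRing D]
    [Algebra FF D] [AddCommGroup V] [Module FF V] [Module D V] 
    (𝒟 : G → Submodule FF D) (𝒱 : G → Submodule FF V)
    (hD : IsGradedDivisionAlgebra FF 𝒟)
    (hV : DirectSum.IsInternal 𝒱)
    (hDV : ∀ (g h : G), ∀ d ∈ 𝒟 g, ∀ x ∈ 𝒱 h, d • x ∈ 𝒱 (g * h))
    (hfd : ∃ s : Finset V, Submodule.span D (s : Set V) = ⊤) :
    ∃ t : Finset V, Nonempty (Module.Basis t D V) := by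
  classical
  obtain ⟨P, hP0, hP1, hP2, hP3⟩ := proj_exists 𝒱 hV
  obtain ⟨Q, hQ0, hQ1, hQ2, hQ3⟩ := proj_exists 𝒟 hD.1.1
  let good : Finset V → Prop := fun t => (∀ x ∈ t, ∃ g, x ∈ 𝒱 g) ∧ Submodule.span D (t : Set V) = ⊤
  have hex : ∃ k, ∃ t, good t ∧ t.card = k := by
    obtain ⟨s, hs⟩ := hfd
    choose T hT using hP3
    refine ⟨_, s.biUnion fun x => (T x).image fun g => P g x, ⟨?_, ?_⟩, rfl⟩
    · intro x hx
      simp only [Finset.mem_biUnion, Finset.mem_image] at hx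
      obtain ⟨y, _, g, _, rfl⟩ := hx
      exact ⟨g, hP0 g y⟩
    · rw [eq_top_iff, ← hs, Submodule.span_le]
      intro x hx
      rw [hT x]
      refine sum_mem fun g hg => Submodule.subset_span ?_
      simp only [Finset.coe_biUnion, Set.mem_iUnion, Finset.coe_image]
      exact ⟨x, hx, g, hg, rfl⟩
  obtain ⟨t, ht, htc⟩ := Nat.find_spec hex
  have hmin : ∀ t', good t' → t.card ≤ t'.card := by
    intro t' h'
    rw [htc]
    exact Nat.find_min' hex ⟨t', h', rfl⟩
  choose! deg hdeg using ht.1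
  refine ⟨t, ⟨Module.Basis.mk (v := fun x : t => (x : V)) ?_ ?_⟩⟩
  · rw [Fintype.linearIndependent_iff]
    intro d hd
    by_contra! hne
    obtain ⟨i, hi⟩ := hne
    -- a nonzero homogeneous component
    obtain ⟨k, hk⟩ : ∃ k, Q k (d i) ≠ 0 := by
      by_contra! hh
      obtain ⟨s, hs⟩ := hQ3 (d i)
      exact hi (by rw [hs]; exact Finset.sum_eq_zero fun g _ => hh g)
    have hcomp : ∀ (c : D) (h : G) (x : V), x ∈ 𝒱 h → ∀ g, P g (c • x) = Q (g * h⁻¹) c • x := by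
      intro c h x hx g
      obtain ⟨s, hs⟩ := hQ3 c
      have e1 : ∀ a, P g (Q a c • x) = if a = g * h⁻¹ then Q a c • x else 0 := by
        intro a
        split_ifs with ha
        · apply hP1
          have := hDV a h _ (hQ0 a c) x hx
          rwa [ha, inv_mul_cancel_right, ← ha] at this
        · refine hP2 (a * h) g ?_ _ (hDV a h _ (hQ0 a c) x hx)
          rintro rfl
          simp at ha
      have e2 : ∀ a, Q (g * h⁻¹) (Q a c) = if a = g * h⁻¹ then Q a c else 0 := by
        intro a
        split_ifs with ha
        · rw [← ha]; exact hQ1 _ _ (hQ0 _ _)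
        · exact hQ2 _ _ ha _ (hQ0 _ _)
      calc P g (c • x) = P g (∑ a ∈ s, Q a c • x) := by rw [← Finset.sum_smul, ← hs]
        _ = ∑ a ∈ s, if a = g * h⁻¹ then Q a c • x else 0 := by rw [map_sum]; simp only [e1]
        _ = (∑ a ∈ s, if a = g * h⁻¹ then Q a c else 0) • x := by
            rw [Finset.sum_smul]; exact Finset.sum_congr rfl fun a _ => by split_ifs <;> simp
        _ = Q (g * h⁻¹) (∑ a ∈ s, Q a c) • x := by rw [map_sum]; simp only [e2]
        _ = _ := by rw [← hs]
    have hrel := congrArg (P (k * deg i)) hd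
    rw [map_sum, map_zero] at hrel
    simp only [fun j : t => hcomp (d j) (deg j) j (hdeg j j.2) (k * deg i)] at hrel
    rw [← Finset.add_sum_erase _ _ (Finset.mem_univ i), mul_inv_cancel_right] at hrel
    obtain ⟨d', _, hd'⟩ := hD.2.2 k _ (hQ0 k (d i)) hk
    have hi_mem : (i : V) ∈ Submodule.span D ((t.erase i : Finset V) : Set V) := by
      have : (i : V) = - d' • ∑ j ∈ Finset.univ.erase i, Q (k * deg i * (deg j)⁻¹) (d j) • (j : V) := by
        rw [← neg_eq_of_add_eq_zero_right hrel, smul_neg, neg_smul, neg_neg, smul_smul, mul_comm,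
          hd', one_smul]
      have hmem : - d' • ∑ j ∈ Finset.univ.erase i, Q (k * deg i * (deg j)⁻¹) (d j) • (j : V) ∈
          Submodule.span D ((t.erase i : Finset V) : Set V) := by
        refine Submodule.smul_mem _ _ (sum_mem fun j hj => Submodule.smul_mem _ _
          (Submodule.subset_span ?_))
        rw [Finset.mem_coe, Finset.mem_erase]
        exact ⟨fun h => (Finset.mem_erase.1 hj).1 (Subtype.ext h), j.2⟩
      exact (congrArg (· ∈ Submodule.span D ((t.erase i : Finset V) : Set V)) this).mpr hmem
    have := hmin (t.erase i) ⟨fun x hx => ht.1 x (Finset.mem_of_mem_erase hx), by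
      rw [eq_top_iff, ← ht.2, Submodule.span_le]
      intro x hx
      by_cases hxi : x = i
      · rw [hxi]; exact hi_mem
      · exact Submodule.subset_span (Finset.mem_coe.2 (Finset.mem_erase.2 ⟨hxi, hx⟩))⟩
    have := Finset.card_erase_lt_of_mem i.2
    omega
  · rw [← ht.2]
    simp

theorem exists_matrix_equiv {FF : Type*} [Field FF]
    {tA : Type*} [Ring tA] [Algebra FF tA]
    {D : Type*} [CommRing D] [Algebra FF D]
    {V : Type*} [AddCommGroup V] [Module FF V] [Module D V] [IsScalarTower FF D V]
    [SMulCommClass FF D V] (ψ : tA →ₐ[FF] Module.End FF V)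
    (hψinj : Function.Injective ψ)
    (hψsurj : ∀ f : Module.End FF V, f ∈ EndDV FF (D := D) (V := V) ↔ ∃ a : tA, ψ a = f)
    {n : Type*} [Fintype n] [DecidableEq n] (b : Module.Basis n D V) :
    Nonempty (tA ≃ₐ[FF] Matrix n n D) := by
  have hl : ∀ a (d : D) (x : V), ψ a (d • x) = d • ψ a x := fun a => (hψsurj (ψ a)).2 ⟨a, rfl⟩
  let ψ' : tA →ₐ[FF] Module.End D V :=
    { toFun := fun a => { toFun := ψ a, map_add' := map_add _, map_smul' := hl a }
      map_one' := by ext x; simp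
      map_mul' := fun a b => by ext x; simp
      map_zero' := by ext x; simp
      map_add' := fun a b => by ext x; simp
      commutes' := fun r => by ext x; simp [Module.algebraMap_end_apply, Algebra.algebraMap_eq_smul_one] }
  have hb : Function.Bijective ψ' := by
    constructor
    · intro a c h
      apply hψinj
      ext x
      exact congrArg (fun f : Module.End D V => f x) h
    · intro f
      obtain ⟨a, ha⟩ := (hψsurj (f.restrictScalars FF)).1 (fun d x => by simp)
      refine ⟨a, ?_⟩
      ext x
      exact congrArg (fun f : Module.End FF V => f x) ha
  exact ⟨(AlgEquiv.ofBijective ψ' hb).trans ((LinearMap.toMatrixAlgEquiv b).restrictScalars FF)⟩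

end Helpers

/-- Let `A = S` be a homogeneous `F`-subalgebra of a `G`-graded simple `FF`-algebra `Ã` which is
graded-isomorphic to `End_D(V)` for a finite-dimensional graded vector space `V` over a
commutative graded division `FF`-algebra `D`, with `FF·A = Ã`.  Then every nonzero homogeneous
ideal of `A` meets `Z(A)_e` nontrivially, `A` satisfies an ordinary polynomial identity, and in
particular if `Z(A)_e` is a field then `A` is a graded simple `F`-algebra. -/
theorem homog_ideal_meets_center_and_PI
    {F : Type*} [Field F] {G : Type*} [Group G] [DecidableEq G]
    {FF : Type*} [Field FF] [Algebra F FF]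
    {tA : Type*} [Ring tA] [Algebra FF tA] [Algebra F tA] [IsScalarTower F FF tA]
    {D : Type*} [CommRing D] [Algebra FF D]
    {V : Type*} [AddCommGroup V] [Module FF V] [Module D V] [IsScalarTower FF D V]
    [SMulCommClass FF D V]
    (𝒜 : G → Submodule FF tA) (𝒟 : G → Submodule FF D) (𝒱 : G → Submodule FF V)
    (hgrA : IsAlgGrading FF 𝒜)
    -- `Ã` is graded simple
    (hsimple : ∀ I : Submodule FF tA, (∀ a : tA, ∀ x ∈ I, a * x ∈ I ∧ x * a ∈ I) →
        (I = ⨆ g, I ⊓ 𝒜 g) → I = ⊥ ∨ I = ⊤)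
    -- `D` is a commutative graded division algebra
    (hD : IsGradedDivisionAlgebra FF 𝒟)
    -- `V` is a graded vector space over `D` ...
    (hV : DirectSum.IsInternal 𝒱)
    (hDV : ∀ (g h : G), ∀ d ∈ 𝒟 g, ∀ x ∈ 𝒱 h, d • x ∈ 𝒱 (g * h))
    -- ... which is finite-dimensional over `D`
    (hfd : ∃ s : Finset V, Submodule.span D (s : Set V) = ⊤)
    -- (i) `Ã ≅ End_D(V)` as graded `FF`-algebras
    (ψ : tA →ₐ[FF] Module.End FF V)
    (hψinj : Function.Injective ψ)
    (hψsurj : ∀ f : Module.End FF V, f ∈ EndDV FF (D := D) (V := V) ↔ ∃ a : tA, ψ a = f)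
    (hψgr : ∀ g : G, (𝒜 g).map ψ.toLinearMap =
        EndDV FF (D := D) (V := V) ⊓ endVGrading FF 𝒱 g)
    -- (ii) `A = S` is a homogeneous `F`-subalgebra of `Ã`
    (S : NonUnitalSubalgebra F tA)
    (hShomog : S.toSubmodule = ⨆ g, S.toSubmodule ⊓ (𝒜 g).restrictScalars F)
    -- (iii) `FF·A = Ã`
    (hspan : Submodule.span FF (S : Set tA) = ⊤) :
    -- every nonzero homogeneous ideal of `A` meets `Z(A)_e` nontrivially
    (∀ I : Submodule F tA, I ≤ S.toSubmodule →
        (∀ a ∈ S, ∀ x ∈ I, a * x ∈ I ∧ x * a ∈ I) →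
        (I = ⨆ g, I ⊓ (𝒜 g).restrictScalars F) → I ≠ ⊥ →
        ∃ z ∈ I, z ≠ 0 ∧ z ∈ ZAe FF F S 𝒜) ∧
    -- `A` satisfies an ordinary polynomial identity
    (∃ f : FreeAlgebra F ℕ, f ≠ 0 ∧
        ∀ v : ℕ → tA, (∀ i, v i ∈ S) → FreeAlgebra.lift F v f = 0) ∧
    -- if `Z(A)_e` is a field, `A` is graded simple
    ((∃ u ∈ ZAe FF F S 𝒜, (∀ x ∈ ZAe FF F S 𝒜, u * x = x) ∧ u ≠ 0 ∧
        ∀ x ∈ ZAe FF F S 𝒜, x ≠ 0 → ∃ y ∈ ZAe FF F S 𝒜, x * y = u) →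
      (∃ a ∈ S, ∃ b ∈ S, a * b ≠ 0) ∧
        ∀ I : Submodule F tA, I ≤ S.toSubmodule →
          (∀ a ∈ S, ∀ x ∈ I, a * x ∈ I ∧ x * a ∈ I) →
          (I = ⨆ g, I ⊓ (𝒜 g).restrictScalars F) →
          I = ⊥ ∨ I = S.toSubmodule) := by
  classical
  obtain ⟨t, ⟨b⟩⟩ := homog_basis 𝒟 𝒱 hD hV hDV hfd
  obtain ⟨φ⟩ := exists_matrix_equiv ψ hψinj hψsurj b
  obtain ⟨P, hP0, hP1, hP2, hP3⟩ := proj_exists 𝒜 hgrA.1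
  have one_mem : (1 : tA) ∈ 𝒜 1 := by
    have : (1 : Module.End FF V) ∈ (𝒜 1).map ψ.toLinearMap := by
      rw [hψgr]
      exact ⟨fun d x => rfl, fun g x hx => by simpa using hx⟩
    obtain ⟨a, ha, h⟩ := this
    have : a = 1 := hψinj (by rw [map_one]; exact h)
    exact this ▸ ha
  -- elements commuting with `S` are central
  have central_of : ∀ z : tA, (∀ y ∈ S, z * y = y * z) → ∀ y, z * y = y * z := by
    intro z hz y
    have : y ∈ Submodule.span FF (S : Set tA) := by rw [hspan]; trivial
    induction this using Submodule.span_induction with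
    | mem y hy => exact hz y hy
    | zero => simp
    | add a b _ _ ha hb => rw [mul_add, add_mul, ha, hb]
    | smul c a _ ha => rw [mul_smul_comm, smul_mul_assoc, ha]
  have part1 : ∀ I : Submodule F tA, I ≤ S.toSubmodule →
        (∀ a ∈ S, ∀ x ∈ I, a * x ∈ I ∧ x * a ∈ I) →
        (I = ⨆ g, I ⊓ (𝒜 g).restrictScalars F) → I ≠ ⊥ →
        ∃ z ∈ I, z ≠ 0 ∧ z ∈ ZAe FF F S 𝒜 := by
    intro I hIS hI hIh hI0
    have hproj := homog_proj_mem 𝒜 P hP1 hP2 I hIh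
    have hJ : Submodule.span FF (I : Set tA) = ⊤ := by
      refine (hsimple (Submodule.span FF (I : Set tA)) ?_ ?_).resolve_left ?_
      · intro a x hx
        have ha : a ∈ Submodule.span FF (S : Set tA) := by rw [hspan]; trivial
        induction hx using Submodule.span_induction with
        | mem x hx =>
          induction ha using Submodule.span_induction with
          | mem a ha => exact ⟨Submodule.subset_span (hI a ha x hx).1,
              Submodule.subset_span (hI a ha x hx).2⟩
          | zero => simp
          | add a c _ _ ha hc =>
            rw [add_mul, mul_add]
            exact ⟨add_mem ha.1 hc.1, add_mem ha.2 hc.2⟩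
          | smul r a _ ha =>
            rw [smul_mul_assoc, mul_smul_comm]
            exact ⟨Submodule.smul_mem _ _ ha.1, Submodule.smul_mem _ _ ha.2⟩
        | zero => simp
        | add x y _ _ hx hy =>
          rw [add_mul, mul_add]
          exact ⟨add_mem hx.1 hy.1, add_mem hx.2 hy.2⟩
        | smul r x _ hx =>
          rw [smul_mul_assoc, mul_smul_comm]
          exact ⟨Submodule.smul_mem _ _ hx.1, Submodule.smul_mem _ _ hx.2⟩
      · apply le_antisymm
        · rw [Submodule.span_le]
          intro x hx
          obtain ⟨s, hs⟩ := hP3 x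
          rw [hs]
          refine sum_mem fun g _ => ?_
          exact Submodule.mem_iSup_of_mem g ⟨Submodule.subset_span (hproj g x hx), hP0 g x⟩
        · exact iSup_le fun g => inf_le_left
      · intro h
        apply hI0
        rw [eq_bot_iff]
        intro x hx
        have : x ∈ Submodule.span FF (I : Set tA) := Submodule.subset_span hx
        rw [h] at this
        exact this
    have hnt : Nontrivial tA := by
      obtain ⟨x, _, hx⟩ := (Submodule.ne_bot_iff I).1 hI0
      exact ⟨x, 0, hx⟩
    have hne : Nonempty t := by
      by_contra hemp
      rw [not_nonempty_iff] at hemp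
      have : Subsingleton tA := φ.injective.subsingleton
      exact not_subsingleton tA this
    let I' : NonUnitalSubring (Matrix t t D) :=
      { carrier := φ '' (I : Set tA)
        add_mem' := by
          rintro _ _ ⟨x, hx, rfl⟩ ⟨y, hy, rfl⟩
          exact ⟨x + y, I.add_mem hx hy, map_add _ _ _⟩
        zero_mem' := ⟨0, I.zero_mem, map_zero _⟩
        neg_mem' := by
          rintro _ ⟨x, hx, rfl⟩
          exact ⟨-x, I.neg_mem hx, map_neg _ _⟩
        mul_mem' := by
          rintro _ _ ⟨x, hx, rfl⟩ ⟨y, hy, rfl⟩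
          exact ⟨x * y, (hI x (hIS hx) y hy).1, map_mul _ _ _⟩ }
    have hI' : Submodule.span FF (I' : Set (Matrix t t D)) = ⊤ := by
      have h1 : (I' : Set (Matrix t t D)) = φ.toLinearMap '' (I : Set tA) := rfl
      rw [h1, ← Submodule.map_span, hJ, Submodule.map_top, LinearMap.range_eq_top]
      exact φ.surjective
    have h1 := one_mem_span_center (FF := FF) I' hI'
    -- by contradiction
    by_contra! hcon
    have hz : ∀ w ∈ Submodule.span FF {z | z ∈ I' ∧ ∀ w, z * w = w * z}, P 1 (φ.symm w) = 0 := by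
      intro w hw
      induction hw using Submodule.span_induction with
      | mem w hw =>
        obtain ⟨⟨z, hzI, rfl⟩, hc⟩ := hw
        rw [AlgEquiv.symm_apply_apply]
        have hzc : ∀ y, z * y = y * z := by
          intro y
          apply φ.injective
          rw [map_mul, map_mul, hc]
        by_contra hne0
        refine hcon (P 1 z) (hproj 1 z hzI) hne0 ⟨hIS (hproj 1 z hzI), ?_, hP0 1 z⟩
        intro y _
        -- homogeneous `y`
        have hhom : ∀ h, ∀ y ∈ 𝒜 h, P 1 z * y = y * P 1 z := by
          intro h y hy
          obtain ⟨s, hs⟩ := hP3 z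
          have e1 : ∀ a, P h (P a z * y) = P 1 (P a z) * y := by
            intro a
            by_cases ha : a = 1
            · subst ha
              rw [hP1 1 _ (hP0 1 z)]
              apply hP1
              simpa using hgrA.2 1 h _ (hP0 1 z) y hy
            · rw [hP2 a 1 ha _ (hP0 a z), zero_mul]
              exact hP2 (a * h) h (by simpa using ha) _ (hgrA.2 a h _ (hP0 a z) y hy)
          have e2 : ∀ a, P h (y * P a z) = y * P 1 (P a z) := by
            intro a
            by_cases ha : a = 1
            · subst ha
              rw [hP1 1 _ (hP0 1 z)]
              apply hP1
              simpa using hgrA.2 h 1 y hy _ (hP0 1 z)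
            · rw [hP2 a 1 ha _ (hP0 a z), mul_zero]
              exact hP2 (h * a) h (by simpa using ha) _ (hgrA.2 h a y hy _ (hP0 a z))
          have f1 : P h (z * y) = P 1 z * y := by
            conv_lhs => rw [hs]
            conv_rhs => rw [hs]
            simp only [Finset.sum_mul, map_sum, e1]
          have f2 : P h (y * z) = y * P 1 z := by
            conv_lhs => rw [hs]
            conv_rhs => rw [hs]
            simp only [Finset.mul_sum, map_sum, e2]
          rw [← f1, ← f2, hzc]
        obtain ⟨s, hs⟩ := hP3 y
        rw [hs, Finset.mul_sum, Finset.sum_mul]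
        exact Finset.sum_congr rfl fun g _ => hhom g _ (hP0 g y)
      | zero => simp
      | add a c _ _ ha hc => rw [map_add, map_add, ha, hc, add_zero]
      | smul r a _ ha => rw [map_smul, map_smul, ha, smul_zero]
    have h2 := hz 1 h1
    rw [map_one, hP1 1 1 one_mem] at h2
    exact one_ne_zero h2
  refine ⟨part1, ?_, ?_⟩
  · refine ⟨stdPoly F (Fintype.card (t × t) + 1), stdPoly_ne F _, fun v _ => ?_⟩
    apply φ.injective
    rw [map_zero, ← std_identity (fun k => φ (v k))]
    simp only [stdPoly, map_sum, Units.smul_def, map_zsmul, map_list_prod, List.map_ofFn,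
      Function.comp_def, FreeAlgebra.lift_ι_apply]
  · rintro ⟨u, hu, hu1, hu0, hinv⟩
    refine ⟨⟨u, hu.1, u, hu.1, by rw [hu1 u hu]; exact hu0⟩, ?_⟩
    intro I hIS hI hIh
    by_cases hI0 : I = ⊥
    · exact Or.inl hI0
    right
    obtain ⟨z, hzI, hz0, hz⟩ := part1 I hIS hI hIh hI0
    obtain ⟨y, hy, hzy⟩ := hinv z hz hz0
    have huI : u ∈ I := hzy ▸ (hI y hy.1 z hzI).2
    have hucen := central_of u hu.2.1
    have huu : u * u = u := hu1 u hu
    let J : Submodule FF tA := LinearMap.ker (LinearMap.mulLeft FF u - LinearMap.id)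
    have hJm : ∀ x, x ∈ J ↔ u * x = x := by
      intro x
      simp [J, sub_eq_zero]
    have hJ : J = ⊤ := by
      refine (hsimple J ?_ ?_).resolve_left ?_
      · intro a x hx
        rw [hJm] at hx
        rw [hJm, hJm, ← mul_assoc, hucen a, mul_assoc, hx, ← mul_assoc, hx]
        exact ⟨rfl, rfl⟩
      · apply le_antisymm
        · intro x hx
          rw [hJm] at hx
          obtain ⟨s, hs⟩ := hP3 x
          rw [hs]
          refine sum_mem fun g _ => Submodule.mem_iSup_of_mem g ⟨?_, hP0 g x⟩
          refine (hJm _).2 ?_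
          have e1 : ∀ a, P g (u * P a x) = u * P g (P a x) := by
            intro a
            have h3 := hgrA.2 1 a u hu.2.2 _ (hP0 a x)
            rw [one_mul] at h3
            by_cases ha : a = g
            · subst ha
              rw [hP1 _ _ h3, hP1 _ _ (hP0 a x)]
            · rw [hP2 _ _ ha _ h3, hP2 _ _ ha _ (hP0 a x), mul_zero]
          have f1 : P g (u * x) = u * P g x := by
            conv_lhs => rw [hs]
            conv_rhs => rw [hs]
            simp only [Finset.mul_sum, map_sum, e1]
          rw [← f1, hx]
        · exact iSup_le fun g => inf_le_left
      · intro h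
        have : u ∈ J := (hJm u).2 huu
        rw [h] at this
        exact hu0 this
    apply le_antisymm hIS
    intro a ha
    have h3 : u * a = a := (hJm a).1 (by rw [hJ]; trivial)
    rw [← h3]
    exact (hI a ha u huI).2
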